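/- arXiv:2210.17231 — 3 statements merged into one kernel-verified Lean document; each statement's English description precedes it below -/
import Mathlib

section
/- Let Γ be an artin algebra, S a set of finitely generated Γ-modules, and X a resolving subcategory of Γ-mod contained in filt(S), the class of modules admitting a finite filtration with factors in S. Then X is contravariantly finite in filt(S) if and only if every module S ∈ S has a right X-approximation. -/
open CategoryTheory Limits Opposite

/-- The Ext group `Ext^n(X, Y)` in the category of `Γ`-modules. -/
noncomputable abbrev extGrp (Γ : Type) [Ring Γ] (n : ℕ) (X Y : ModuleCat Γ) : ModuleCat ℤ :=
  ((Ext ℤ (ModuleCat Γ) n).obj (op X)).obj Y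

/-- The class of finitely generated `Γ`-modules. -/
def fgMod (Γ : Type) [Ring Γ] : Set (ModuleCat Γ) := {M | Module.Finite Γ M}

/-- A resolving subcategory of the category of finitely generated `Γ`-modules:
it consists of finitely generated modules, is closed under isomorphisms, contains all
(finitely generated) projective modules, and is closed under extensions, direct summands
and kernels of epimorphisms. -/
structure IsResolving (Γ : Type) [Ring Γ] (𝒳 : Set (ModuleCat Γ)) : Prop where
  subset_fg : 𝒳 ⊆ fgMod Γ
  iso_closed : ∀ M N : ModuleCat Γ, Nonempty (M ≅ N) → M ∈ 𝒳 → N ∈ 𝒳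
  proj_mem : ∀ M : ModuleCat Γ, M ∈ fgMod Γ → Projective M → M ∈ 𝒳
  ext_closed : ∀ S : ShortComplex (ModuleCat Γ), S.ShortExact →
    S.X₁ ∈ 𝒳 → S.X₃ ∈ 𝒳 → S.X₂ ∈ 𝒳
  summand_closed : ∀ M N : ModuleCat Γ, (M ⊞ N) ∈ 𝒳 → M ∈ 𝒳
  ker_epi_closed : ∀ S : ShortComplex (ModuleCat Γ), S.ShortExact →
    S.X₂ ∈ 𝒳 → S.X₃ ∈ 𝒳 → S.X₁ ∈ 𝒳

/-- A coresolving subcategory: consists of finitely generated modules, closed under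
isomorphisms, contains all (finitely generated) injective modules, and is closed under
extensions, direct summands and cokernels of monomorphisms. -/
structure IsCoresolving (Γ : Type) [Ring Γ] (𝒴 : Set (ModuleCat Γ)) : Prop where
  subset_fg : 𝒴 ⊆ fgMod Γ
  iso_closed : ∀ M N : ModuleCat Γ, Nonempty (M ≅ N) → M ∈ 𝒴 → N ∈ 𝒴
  inj_mem : ∀ M : ModuleCat Γ, M ∈ fgMod Γ → Injective M → M ∈ 𝒴
  ext_closed : ∀ S : ShortComplex (ModuleCat Γ), S.ShortExact →
    S.X₁ ∈ 𝒴 → S.X₃ ∈ 𝒴 → S.X₂ ∈ 𝒴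
  summand_closed : ∀ M N : ModuleCat Γ, (M ⊞ N) ∈ 𝒴 → M ∈ 𝒴
  coker_mono_closed : ∀ S : ShortComplex (ModuleCat Γ), S.ShortExact →
    S.X₁ ∈ 𝒴 → S.X₂ ∈ 𝒴 → S.X₃ ∈ 𝒴

/-- The right perpendicular category `𝒳^⊥ = ∩_{i ≥ 1} ker Ext^i(𝒳, −)`
inside the finitely generated modules. -/
def rightPerp (Γ : Type) [Ring Γ] (𝒳 : Set (ModuleCat Γ)) : Set (ModuleCat Γ) :=
  {M | M ∈ fgMod Γ ∧ ∀ X ∈ 𝒳, ∀ i : ℕ, 1 ≤ i → Subsingleton (extGrp Γ i X M)}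

/-- `f : C ⟶ M` is a right `𝒞`-approximation of `M`. -/
def IsRightApprox {𝒜 : Type*} [Category 𝒜] (𝒞 : Set 𝒜) {C M : 𝒜} (f : C ⟶ M) : Prop :=
  C ∈ 𝒞 ∧ ∀ C' ∈ 𝒞, ∀ g : C' ⟶ M, ∃ h : C' ⟶ C, h ≫ f = g

/-- `𝒞` is a contravariantly finite subcategory of `𝒟`. -/
def ContravariantlyFiniteIn {𝒜 : Type*} [Category 𝒜] (𝒞 𝒟 : Set 𝒜) : Prop :=
  ∀ M ∈ 𝒟, ∃ (C : 𝒜) (f : C ⟶ M), IsRightApprox 𝒞 f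

/-- `filt(𝒮)`: the modules admitting a finite filtration with factors in `𝒮`; equivalently,
the smallest class containing `𝒮` and the zero modules which is closed under extensions. -/
inductive Filt (Γ : Type) [Ring Γ] (𝒮 : Set (ModuleCat Γ)) : ModuleCat Γ → Prop
  | of {M : ModuleCat Γ} (h : M ∈ 𝒮) : Filt Γ 𝒮 M
  | zero {M : ModuleCat Γ} (h : Limits.IsZero M) : Filt Γ 𝒮 M
  | ext (S : ShortComplex (ModuleCat Γ)) (hS : S.ShortExact)
      (h1 : Filt Γ 𝒮 S.X₁) (h3 : Filt Γ 𝒮 S.X₃) : Filt Γ 𝒮 S.X₂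

/-- A right minimal approximation exists as soon as an approximation exists. -/
theorem exists_minimal_approx (Γ : Type) [Ring Γ] [IsArtinianRing Γ]
    (𝒳 : Set (ModuleCat Γ)) (h𝒳 : IsResolving Γ 𝒳) (A : ModuleCat Γ)
    (h : ∃ (X : ModuleCat Γ) (f : X ⟶ A), IsRightApprox 𝒳 f) :
    ∃ (X : ModuleCat Γ) (f : X ⟶ A), IsRightApprox 𝒳 f ∧
      ∀ φ : X ⟶ X, φ ≫ f = f → IsIso φ := by
  let T : Set ℕ∞ := {l | ∃ (X : ModuleCat Γ) (f : X ⟶ A), IsRightApprox 𝒳 f ∧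
    Module.length Γ X = l}
  have hT : T.Nonempty := by
    obtain ⟨X, f, hf⟩ := h
    exact ⟨_, X, f, hf, rfl⟩
  obtain ⟨X, f, hf, hl⟩ := WellFounded.min_mem (wellFounded_lt (α := ℕ∞)) T hT
  refine ⟨X, f, hf, fun φ hφ => ?_⟩
  have : Module.Finite Γ X := h𝒳.subset_fg hf.1
  have hpow : ∀ n : ℕ, ∀ x : X, f.hom ((φ.hom ^ n) x) = f.hom x := by
    intro n
    induction n with
    | zero => intro x; simp
    | succ n ih =>
      intro x
      rw [pow_succ, Module.End.mul_apply, ih]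
      exact congrArg (fun k : X ⟶ A => k.hom x) hφ
  obtain ⟨n, hn⟩ := Filter.eventually_atTop.mp
    (LinearMap.eventually_isCompl_ker_pow_range_pow φ.hom)
  have hc := hn (n + 1) (by omega)
  set N := LinearMap.range (φ.hom ^ (n + 1)) with hN
  set K := LinearMap.ker (φ.hom ^ (n + 1)) with hK
  have hmem : ModuleCat.of Γ N ∈ 𝒳 := by
    apply h𝒳.summand_closed _ (ModuleCat.of Γ K)
    refine h𝒳.iso_closed X _ ⟨?_⟩ hf.1
    exact (Submodule.prodEquivOfIsCompl N K hc.symm).symm.toModuleIso ≪≫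
      (ModuleCat.biprodIsoProd (ModuleCat.of Γ N) (ModuleCat.of Γ K)).symm
  have happ : IsRightApprox 𝒳 (ModuleCat.ofHom (f.hom ∘ₗ N.subtype) : ModuleCat.of Γ N ⟶ A) := by
    refine ⟨hmem, fun C' hC' g => ?_⟩
    obtain ⟨k, hk⟩ := hf.2 C' hC' g
    refine ⟨ModuleCat.ofHom ((φ.hom ^ (n + 1)).rangeRestrict ∘ₗ k.hom), ?_⟩
    ext x
    subst hk
    exact hpow (n + 1) (k.hom x)
  have htop : N = ⊤ := by
    by_contra hne
    have h1 := Submodule.length_lt hne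
    refine WellFounded.not_lt_min (wellFounded_lt (α := ℕ∞)) T ⟨_, _, happ, rfl⟩ ?_
    rw [← hl]
    exact h1
  have hsurj : Function.Surjective φ.hom := by
    have h2 : Function.Surjective (φ.hom ^ (n + 1)) := LinearMap.range_eq_top.mp htop
    intro x
    obtain ⟨y, hy⟩ := h2 x
    exact ⟨(φ.hom ^ n) y, by rw [← hy, pow_succ']; rfl⟩
  have hb := IsNoetherian.bijective_of_surjective_endomorphism φ.hom hsurj
  exact (ConcreteCategory.isIso_iff_bijective φ).mpr hb

/-- Pushing out a short exact sequence along a map from the left term. -/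
theorem pushout_shortExact {C : Type*} [Category C] [Abelian C] (S : ShortComplex C)
    (hS : S.ShortExact) {X : C} (a : S.X₁ ⟶ X) :
    ∃ (w : pushout.inr S.f a ≫ pushout.desc S.g (0 : X ⟶ S.X₃) (by simp) = 0),
      (ShortComplex.mk (pushout.inr S.f a) (pushout.desc S.g (0 : X ⟶ S.X₃) (by simp)) w).ShortExact := by
  have := hS.mono_f
  have := hS.epi_g
  have w : pushout.inr S.f a ≫ pushout.desc S.g (0 : X ⟶ S.X₃) (by simp) = 0 := pushout.inr_desc _ _ _
  refine ⟨w, ?_⟩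
  have hepi : Epi (pushout.desc S.g (0 : X ⟶ S.X₃) (by simp) : pushout S.f a ⟶ S.X₃) := by
    have : Epi (pushout.inl S.f a ≫ pushout.desc S.g (0 : X ⟶ S.X₃) (by simp)) := by
      rw [pushout.inl_desc]; infer_instance
    exact epi_of_epi (pushout.inl S.f a) _
  refine ShortComplex.ShortExact.mk' ?_ (by dsimp; infer_instance) hepi
  refine ShortComplex.exact_of_g_is_cokernel _ ?_
  refine CokernelCofork.IsColimit.ofπ' _ _ (fun {B} k hk => ?_)
  dsimp at k hk
  refine ⟨hS.exact.desc (pushout.inl S.f a ≫ k) ?_, ?_⟩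
  · rw [← Category.assoc, pushout.condition, Category.assoc, hk, comp_zero]
  · dsimp
    apply pushout.hom_ext
    · rw [pushout.inl_desc_assoc, hS.exact.g_desc]
    · rw [pushout.inr_desc_assoc, zero_comp, hk]

/-- Pulling back a short exact sequence along a map to the right term. -/
theorem pullback_shortExact {C : Type*} [Category C] [Abelian C] (S : ShortComplex C)
    (hS : S.ShortExact) {X : C} (a : X ⟶ S.X₃) :
    ∃ (w : pullback.lift S.f (0 : S.X₁ ⟶ X) (by simp) ≫ pullback.snd S.g a = 0),
      (ShortComplex.mk (pullback.lift S.f (0 : S.X₁ ⟶ X) (by simp)) (pullback.snd S.g a) w).ShortExact := by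
  have := hS.mono_f
  have := hS.epi_g
  have w : pullback.lift S.f (0 : S.X₁ ⟶ X) (by simp) ≫ pullback.snd S.g a = 0 := pullback.lift_snd _ _ _
  refine ⟨w, ?_⟩
  have hmono : Mono (pullback.lift S.f (0 : S.X₁ ⟶ X) (by simp) : S.X₁ ⟶ pullback S.g a) := by
    have : Mono (pullback.lift S.f (0 : S.X₁ ⟶ X) (by simp) ≫ pullback.fst S.g a) := by
      rw [pullback.lift_fst]; infer_instance
    exact mono_of_mono _ (pullback.fst S.g a)
  refine ShortComplex.ShortExact.mk' ?_ hmono (by dsimp; infer_instance)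
  refine ShortComplex.exact_of_f_is_kernel _ ?_
  refine KernelFork.IsLimit.ofι' _ _ (fun {B} k hk => ?_)
  dsimp at k hk
  refine ⟨hS.exact.lift (k ≫ pullback.fst S.g a) ?_, ?_⟩
  · rw [Category.assoc, pullback.condition, ← Category.assoc, hk, zero_comp]
  · dsimp
    apply pullback.hom_ext
    · rw [Category.assoc, pullback.lift_fst, hS.exact.lift_f]
    · rw [Category.assoc, pullback.lift_snd, comp_zero, hk]

/-- The generalized horseshoe lemma (existence part). -/
theorem approx_of_shortExact.{u} (Γ : Type) [Ring Γ] [IsArtinianRing Γ]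
    (𝒳 : Set (ModuleCat.{u} Γ)) (h𝒳 : IsResolving Γ 𝒳)
    (S : ShortComplex (ModuleCat Γ)) (hS : S.ShortExact)
    (h1 : ∃ (X : ModuleCat Γ) (f : X ⟶ S.X₁), IsRightApprox 𝒳 f)
    (h3 : ∃ (X : ModuleCat Γ) (f : X ⟶ S.X₃), IsRightApprox 𝒳 f) :
    ∃ (X : ModuleCat Γ) (f : X ⟶ S.X₂), IsRightApprox 𝒳 f := by
  have := hS.mono_f
  have := hS.epi_g
  obtain ⟨XA, f, hf, hmin⟩ := exists_minimal_approx Γ 𝒳 h𝒳 _ h1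
  obtain ⟨XC, c, hc⟩ := h3
  have : Module.Finite Γ XC := h𝒳.subset_fg hc.1
  obtain ⟨n, q', hq'⟩ := Module.Finite.exists_fin' Γ XC
  let P : ModuleCat.{u} Γ := ModuleCat.of Γ (ULift.{u} (Fin n → Γ))
  let q : P ⟶ XC := ModuleCat.ofHom (q' ∘ₗ ULift.moduleEquiv.toLinearMap)
  have hq : Epi q := (ModuleCat.epi_iff_surjective q).mpr
    (hq'.comp ULift.moduleEquiv.surjective)
  have hP : Projective P := by
    have : Module.Projective Γ P := inferInstanceAs (Module.Projective Γ (ULift.{u} (Fin n → Γ)))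
    exact ModuleCat.projective_of_categoryTheory_projective P
  have hPX : P ∈ 𝒳 := h𝒳.proj_mem P (inferInstanceAs (Module.Finite Γ (ULift.{u} (Fin n → Γ)))) hP
  let Q : ShortComplex (ModuleCat Γ) := ShortComplex.mk (kernel.ι q) q (kernel.condition q)
  have hQ : Q.ShortExact :=
    ShortComplex.ShortExact.mk' (ShortComplex.exact_kernel q)
      (inferInstanceAs (Mono (kernel.ι q))) hq
  have hΩ : Q.X₁ ∈ 𝒳 := h𝒳.ker_epi_closed Q hQ hPX hc.1
  -- lift `P ⟶ XC ⟶ S.X₃` to `S.X₂`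
  let b : P ⟶ S.X₂ := Projective.factorThru (q ≫ c) S.g
  have hb : b ≫ S.g = q ≫ c := Projective.factorThru_comp _ _
  have hbk : (Q.f ≫ b) ≫ S.g = 0 := by
    rw [Category.assoc, hb, ← Category.assoc]
    exact (congrArg (· ≫ c) Q.zero).trans zero_comp
  obtain ⟨a, ha⟩ := hf.2 _ hΩ (hS.exact.lift (Q.f ≫ b) hbk)
  have ha' : Q.f ≫ b = a ≫ f ≫ S.f := by
    rw [← Category.assoc, ha, hS.exact.lift_f]
  obtain ⟨w, hY⟩ := pushout_shortExact Q hQ a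
  set Y := pushout Q.f a with hYdef
  let j : XA ⟶ Y := pushout.inr Q.f a
  let p : Y ⟶ XC := pushout.desc Q.g (0 : XA ⟶ Q.X₃) (by simp)
  let YS : ShortComplex (ModuleCat Γ) := ShortComplex.mk j p w
  have hYS : YS.ShortExact := hY
  have hYX : Y ∈ 𝒳 := h𝒳.ext_closed YS hYS hf.1 hc.1
  let y : Y ⟶ S.X₂ := pushout.desc b (f ≫ S.f) ha'
  have hjy : j ≫ y = f ≫ S.f := pushout.inr_desc _ _ _
  have hyg : y ≫ S.g = p ≫ c := by
    apply pushout.hom_ext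
    · rw [pushout.inl_desc_assoc, pushout.inl_desc_assoc, hb]
    · rw [pushout.inr_desc_assoc, pushout.inr_desc_assoc, zero_comp, Category.assoc, S.zero,
        comp_zero]
  refine ⟨Y, y, hYX, fun X' hX' u => ?_⟩
  obtain ⟨v, hv⟩ := hc.2 X' hX' (u ≫ S.g)
  obtain ⟨w', hZ⟩ := pullback_shortExact YS hYS v
  set Z := pullback YS.g v with hZdef
  let i : XA ⟶ Z := pullback.lift YS.f (0 : YS.X₁ ⟶ X') (by simp)
  let z₁ : Z ⟶ Y := pullback.fst YS.g v
  let z₂ : Z ⟶ X' := pullback.snd YS.g v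
  have hz : z₁ ≫ p = z₂ ≫ v := pullback.condition
  have hi₁ : i ≫ z₁ = j := pullback.lift_fst _ _ _
  have hi₂ : i ≫ z₂ = 0 := pullback.lift_snd _ _ _
  let ZS : ShortComplex (ModuleCat Γ) := ShortComplex.mk i z₂ w'
  have hZS : ZS.ShortExact := hZ
  have hZX : Z ∈ 𝒳 := h𝒳.ext_closed ZS hZS hf.1 hX'
  have hzero : (z₁ ≫ y - z₂ ≫ u) ≫ S.g = 0 := by
    rw [Preadditive.sub_comp, Category.assoc, Category.assoc, hyg, ← hv, ← Category.assoc, hz,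
      Category.assoc, sub_self]
  let g : Z ⟶ S.X₁ := hS.exact.lift _ hzero
  have hg : g ≫ S.f = z₁ ≫ y - z₂ ≫ u := hS.exact.lift_f _ _
  have hig : i ≫ g = f := by
    rw [← cancel_mono S.f, Category.assoc, hg, Preadditive.comp_sub, ← Category.assoc, hi₁,
      ← Category.assoc, hi₂, zero_comp, sub_zero, hjy]
  obtain ⟨h, hh⟩ := hf.2 Z hZX g
  have hφ : (i ≫ h) ≫ f = f := by rw [Category.assoc, hh, hig]
  have hiso : IsIso (i ≫ h) := hmin _ hφ
  let r : Z ⟶ XA := h ≫ inv (i ≫ h)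
  have hir : i ≫ r = 𝟙 _ := by
    rw [← Category.assoc]; exact IsIso.hom_inv_id (i ≫ h)
  have hrf : r ≫ f = g := by
    rw [Category.assoc, (IsIso.inv_comp_eq (i ≫ h)).mpr hφ.symm, hh]
  have hepi : Epi z₂ := hZS.epi_g
  have hk : ZS.f ≫ (z₁ - r ≫ j) = 0 := by
    change i ≫ (z₁ - r ≫ j) = 0
    rw [Preadditive.comp_sub, hi₁, ← Category.assoc, hir, Category.id_comp, sub_self]
  have : Epi ZS.g := hepi
  let s : X' ⟶ Y := hZS.exact.desc (z₁ - r ≫ j) hk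
  have hs : z₂ ≫ s = z₁ - r ≫ j := hZS.exact.g_desc _ _
  refine ⟨s, ?_⟩
  rw [← cancel_epi z₂, ← Category.assoc, hs, Preadditive.sub_comp, Category.assoc, hjy,
    ← Category.assoc r, hrf, hg, sub_sub_cancel]

/-- Let `Γ` be an artin algebra, `𝒮` a set of finitely generated
`Γ`-modules, and `𝒳` a resolving subcategory contained in `filt(𝒮)`. Then `𝒳` is
contravariantly finite in `filt(𝒮)` if and only if every `S ∈ 𝒮` has a right
`𝒳`-approximation. -/
theorem resolving_contravariantlyFinite_in_filt_iff
    (R : Type) [CommRing R] [IsArtinianRing R]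
    (Γ : Type) [Ring Γ] [Algebra R Γ] [Module.Finite R Γ]
    (𝒮 : Set (ModuleCat Γ)) (h𝒮 : 𝒮 ⊆ fgMod Γ)
    (𝒳 : Set (ModuleCat Γ)) (h𝒳 : IsResolving Γ 𝒳)
    (h𝒳filt : 𝒳 ⊆ {M | Filt Γ 𝒮 M}) :
    ContravariantlyFiniteIn 𝒳 {M | Filt Γ 𝒮 M} ↔
      ∀ S ∈ 𝒮, ∃ (X : ModuleCat Γ) (f : X ⟶ S), IsRightApprox 𝒳 f := by
  have hΓ : IsArtinianRing Γ := IsArtinianRing.of_finite R Γ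
  constructor
  · intro h S hS
    exact h S (Filt.of hS)
  · intro h M hM
    change Filt Γ 𝒮 M at hM
    induction hM with
    | of hm => exact h _ hm
    | @zero M hm =>
      refine ⟨M, 𝟙 M, h𝒳.proj_mem M ?_ ?_, fun C' _ g => ⟨g, Category.comp_id g⟩⟩
      · have : Subsingleton M := ModuleCat.subsingleton_of_isZero hm
        exact (inferInstance : Module.Finite Γ M)
      · exact hm.projective
    | ext S hS _ _ ih1 ih3 => exact approx_of_shortExact Γ 𝒳 h𝒳 S hS ih1 ih3
end

section
/- Let Γ be an artin algebra and X a contravariantly finite resolving subcategory of Γ-mod. For any Γ-module M, if f: X → M is a minimal right X-approximation, then f is an epimorphism and its kernel Y satisfies Ext^i(X', Y) = 0 for all X' ∈ X and all i ≥ 1 (i.e., Y ∈ X^⊥). -/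
open CategoryTheory Limits Opposite

/-- A morphism `f : C ⟶ M` is right minimal if every endomorphism `φ` of `C` with
`φ ≫ f = f` is an automorphism. -/
def IsRightMinimal {𝒜 : Type*} [Category 𝒜] {C M : 𝒜} (f : C ⟶ M) : Prop :=
  ∀ φ : C ⟶ C, φ ≫ f = f → IsIso φ

/-- Cobase change of a short exact sequence along a morphism out of its left term. -/
theorem wak_pushout_shortExact {𝒜 : Type*} [Category 𝒜] [Abelian 𝒜]
    (S : ShortComplex 𝒜) (hS : S.ShortExact) {X : 𝒜} (g : S.X₁ ⟶ X) :
    (ShortComplex.mk (pushout.inr S.f g) (pushout.desc S.g 0 (by simp))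
      (pushout.inr_desc _ _ _)).ShortExact := by
  have := hS.mono_f
  have := hS.epi_g
  have hepi : Epi (pushout.desc (f := S.f) (g := g) S.g 0 (by simp)) := by
    have h : pushout.inl S.f g ≫ pushout.desc (f := S.f) (g := g) S.g 0 (by simp) = S.g :=
      pushout.inl_desc _ _ _
    exact epi_of_epi_fac h
  refine
    { exact := ?_
      mono_f := by dsimp; infer_instance
      epi_g := hepi }
  refine ShortComplex.exact_of_g_is_cokernel _
    (CokernelCofork.IsColimit.ofπ' _ _ (fun {T} k hk => ⟨hS.exact.desc (pushout.inl S.f g ≫ k) ?_, ?_⟩))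
  · rw [pushout.condition_assoc]
    dsimp at hk
    rw [hk, comp_zero]
  · dsimp at hk ⊢
    apply pushout.hom_ext
    · rw [pushout.inl_desc_assoc, hS.exact.g_desc]
    · rw [pushout.inr_desc_assoc, zero_comp, hk]

/-- Wakamatsu's lemma, extension form: any morphism from a first syzygy to the kernel extends. -/
theorem wak_extend (Γ : Type) [Ring Γ] (𝒳 : Set (ModuleCat.{0} Γ)) (h𝒳 : IsResolving Γ 𝒳)
    {X M : ModuleCat.{0} Γ} (f : X ⟶ M) (hf : IsRightApprox 𝒳 f) (hfmin : IsRightMinimal f)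
    (S : ShortComplex (ModuleCat.{0} Γ)) (hS : S.ShortExact) (h3 : S.X₃ ∈ 𝒳)
    (g : S.X₁ ⟶ kernel f) : ∃ h : S.X₂ ⟶ kernel f, S.f ≫ h = g := by
  let k := g ≫ kernel.ι f
  have hE : pushout S.f k ∈ 𝒳 :=
    h𝒳.ext_closed _ (wak_pushout_shortExact S hS k) hf.1 h3
  let e : pushout S.f k ⟶ M := pushout.desc 0 f (by simp [k])
  obtain ⟨h, hh⟩ := hf.2 _ hE e
  let φ := pushout.inr S.f k ≫ h
  have hφ : φ ≫ f = f := by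
    simp only [φ, hh, Category.assoc]
    exact pushout.inr_desc _ _ _
  have := hfmin φ hφ
  have hφ' : inv φ ≫ f = f := by rw [IsIso.inv_comp_eq, hφ]
  refine ⟨kernel.lift f (pushout.inl S.f k ≫ h ≫ inv φ) ?_, ?_⟩
  · simp only [Category.assoc, hφ', hh]
    exact pushout.inl_desc _ _ _
  · rw [← cancel_mono (kernel.ι f)]
    simp only [Category.assoc, kernel.lift_ι]
    rw [pushout.condition_assoc]
    have : pushout.inr S.f k ≫ h ≫ inv φ = 𝟙 X := by
      rw [← Category.assoc]; exact IsIso.hom_inv_id φ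
    rw [this, Category.comp_id]

/-- Every finitely generated module is a quotient of a finitely generated projective one. -/
theorem wak_cover (Γ : Type) [Ring Γ] (N : ModuleCat.{0} Γ) (hN : N ∈ fgMod Γ) :
    ∃ (P : ModuleCat.{0} Γ) (p : P ⟶ N), P ∈ fgMod Γ ∧ Projective P ∧ Epi p := by
  have : Module.Finite Γ N := hN
  obtain ⟨n, q, hq⟩ := Module.Finite.exists_fin' Γ N
  refine ⟨ModuleCat.of Γ (Fin n → Γ), ModuleCat.ofHom q, ?_, ?_, ?_⟩
  · exact (inferInstance : Module.Finite Γ (Fin n → Γ))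
  · exact (IsProjective.iff_projective (Fin n → Γ)).1 inferInstance
  · exact (ModuleCat.epi_iff_surjective _).2 hq

/-- Vanishing of the derived-category `Ext` groups. -/
theorem wak_abelian_ext (Γ : Type) [Ring Γ] (𝒳 : Set (ModuleCat.{0} Γ)) (h𝒳 : IsResolving Γ 𝒳)
    {X M : ModuleCat.{0} Γ} (f : X ⟶ M) (hf : IsRightApprox 𝒳 f) (hfmin : IsRightMinimal f)
    (i : ℕ) : ∀ X' ∈ 𝒳, ∀ x : Abelian.Ext X' (kernel f) (i + 1), x = 0 := by
  induction i with
  | zero =>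
    intro X' hX' x
    obtain ⟨P, p, hP, hPp, hp⟩ := wak_cover Γ X' (h𝒳.subset_fg hX')
    let S := ShortComplex.mk (kernel.ι p) p (kernel.condition p)
    have hS : S.ShortExact :=
      { exact := ShortComplex.exact_of_f_is_kernel _ (kernelIsKernel p)
        mono_f := by dsimp [S]; infer_instance
        epi_g := hp }
    have : Projective S.X₂ := hPp
    obtain ⟨y, hy⟩ := Abelian.Ext.contravariant_sequence_exact₃ hS (kernel f) x
      (Abelian.Ext.eq_zero_of_projective _) (n₀ := 0) (by simp)
    obtain ⟨g, rfl⟩ := (Abelian.Ext.mk₀_bijective _ _).2 y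
    obtain ⟨h, rfl⟩ := wak_extend Γ 𝒳 h𝒳 f hf hfmin S hS hX' g
    rw [← hy, ← Abelian.Ext.mk₀_comp_mk₀, hS.extClass_comp_assoc]
  | succ i ih =>
    intro X' hX' x
    obtain ⟨P, p, hP, hPp, hp⟩ := wak_cover Γ X' (h𝒳.subset_fg hX')
    let S := ShortComplex.mk (kernel.ι p) p (kernel.condition p)
    have hS : S.ShortExact :=
      { exact := ShortComplex.exact_of_f_is_kernel _ (kernelIsKernel p)
        mono_f := by dsimp [S]; infer_instance
        epi_g := hp }
    have : Projective S.X₂ := hPp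
    obtain ⟨y, hy⟩ := Abelian.Ext.contravariant_sequence_exact₃ hS (kernel f) x
      (Abelian.Ext.eq_zero_of_projective _) (n₀ := i + 1) (by lia)
    have h1 : S.X₁ ∈ 𝒳 := h𝒳.ker_epi_closed S hS (h𝒳.proj_mem _ hP hPp) hX'
    rw [← hy, ih _ h1 y, Abelian.Ext.comp_zero]

/-- Vanishing passes from the derived-category `Ext` to the derived-functor `Ext`. -/
theorem wak_compare (Γ : Type) [Ring Γ] (X Y : ModuleCat.{0} Γ) (i : ℕ)
    (h : ∀ x : Abelian.Ext X Y (i + 1), x = 0) : Subsingleton (extGrp Γ (i + 1) X Y) := by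
  let P := projectiveResolution X
  refine ModuleCat.subsingleton_of_isZero (IsZero.of_iso ?_ (P.isoExt (R := ℤ) (i + 1) Y))
  rw [← HomologicalComplex.exactAt_iff_isZero_homology,
    HomologicalComplex.exactAt_iff' _ i (i + 1) (i + 2) (by simp) (by simp),
    ShortComplex.moduleCat_exact_iff]
  intro (x : P.complex.X (i + 1) ⟶ Y) hx
  obtain ⟨g, hg⟩ := (P.extMk_eq_zero_iff x (i + 2) rfl hx i rfl).1 (h _)
  exact ⟨g, hg⟩

/-- Wakamatsu's lemma. Let `Γ` be an artin algebra and `𝒳` a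
contravariantly finite resolving subcategory of `Γ`-mod. If `f : X ⟶ M` is a minimal right
`𝒳`-approximation of a finitely generated `Γ`-module `M`, then `f` is an epimorphism and
its kernel `Y` satisfies `Ext^i(X', Y) = 0` for all `X' ∈ 𝒳` and all `i ≥ 1`. -/
theorem wakamatsu_minimal_right_approximation
    (R : Type) [CommRing R] [IsArtinianRing R]
    (Γ : Type) [Ring Γ] [Algebra R Γ] [Module.Finite R Γ]
    (𝒳 : Set (ModuleCat Γ)) (h𝒳 : IsResolving Γ 𝒳)
    (h𝒳cf : ∀ M : ModuleCat Γ, M ∈ fgMod Γ →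
      ∃ (X : ModuleCat Γ) (f : X ⟶ M), IsRightApprox 𝒳 f)
    (M : ModuleCat Γ) (hM : M ∈ fgMod Γ)
    (X : ModuleCat Γ) (f : X ⟶ M)
    (hf : IsRightApprox 𝒳 f) (hfmin : IsRightMinimal f) :
    Epi f ∧
    ∀ X' ∈ 𝒳, ∀ i : ℕ, 1 ≤ i →
      Subsingleton (extGrp Γ i X' (Limits.kernel f)) := by
  constructor
  · obtain ⟨P, p, hP, hPp, hp⟩ := wak_cover Γ M hM
    obtain ⟨h, hh⟩ := hf.2 P (h𝒳.proj_mem _ hP hPp) p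
    exact epi_of_epi_fac hh
  · intro X' hX' i hi
    obtain ⟨j, rfl⟩ : ∃ j, i = j + 1 := ⟨i - 1, by lia⟩
    exact wak_compare Γ X' _ j (wak_abelian_ext Γ 𝒳 h𝒳 f hf hfmin j X' hX')
end

section
/- Let Γ be an artin algebra and (X, Y) a hereditary cotorsion pair in Γ-mod. Then X is contravariantly finite if and only if Y is covariantly finite. -/
open CategoryTheory Limits Opposite

/-- The left perpendicular category `^⊥𝒴 = ∩_{i ≥ 1} ker Ext^i(−, 𝒴)`
inside the finitely generated modules. -/
def leftPerp (Γ : Type) [Ring Γ] (𝒴 : Set (ModuleCat Γ)) : Set (ModuleCat Γ) :=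
  {M | M ∈ fgMod Γ ∧ ∀ Y ∈ 𝒴, ∀ i : ℕ, 1 ≤ i → Subsingleton (extGrp Γ i M Y)}

/-- A pair `(𝒳, 𝒴)` of classes of finitely generated `Γ`-modules is a cotorsion pair if
`𝒳 = ker Ext¹(−, 𝒴)` and `𝒴 = ker Ext¹(𝒳, −)` (within finitely generated modules). -/
structure IsCotorsionPair (Γ : Type) [Ring Γ] (𝒳 𝒴 : Set (ModuleCat Γ)) : Prop where
  left_eq : 𝒳 = {M | M ∈ fgMod Γ ∧ ∀ Y ∈ 𝒴, Subsingleton (extGrp Γ 1 M Y)}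
  right_eq : 𝒴 = {M | M ∈ fgMod Γ ∧ ∀ X ∈ 𝒳, Subsingleton (extGrp Γ 1 X M)}

/-- A cotorsion pair `(𝒳, 𝒴)` is hereditary if `Ext^i(X, Y) = 0` for all `i ≥ 1`,
`X ∈ 𝒳`, `Y ∈ 𝒴`. -/
def IsHereditaryPair (Γ : Type) [Ring Γ] (𝒳 𝒴 : Set (ModuleCat Γ)) : Prop :=
  ∀ X ∈ 𝒳, ∀ Y ∈ 𝒴, ∀ i : ℕ, 1 ≤ i → Subsingleton (extGrp Γ i X Y)

/-- `f : M ⟶ C` is a left `𝒞`-approximation of `M`. -/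
def IsLeftApprox {𝒜 : Type*} [Category 𝒜] (𝒞 : Set 𝒜) {M C : 𝒜} (f : M ⟶ C) : Prop :=
  C ∈ 𝒞 ∧ ∀ C' ∈ 𝒞, ∀ g : M ⟶ C', ∃ h : C ⟶ C', f ≫ h = g

namespace CotorsionAux

section Elementary

variable {Γ : Type} [Ring Γ]

/-- Every short exact sequence `0 → Y → E → X → 0` splits. -/
def Spl (Γ : Type) [Ring Γ] (X Y : Type) [AddCommGroup X] [Module Γ X]
    [AddCommGroup Y] [Module Γ Y] : Prop :=
  ∀ (E : Type) [AddCommGroup E] [Module Γ E] (i : Y →ₗ[Γ] E) (p : E →ₗ[Γ] X),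
    Function.Injective i → Function.Surjective p → Function.Exact i p →
      ∃ s : X →ₗ[Γ] E, ∀ x, p (s x) = x

variable {A B C E X Y Z M : Type}
  [AddCommGroup A] [Module Γ A] [AddCommGroup B] [Module Γ B] [AddCommGroup C] [Module Γ C]
  [AddCommGroup E] [Module Γ E] [AddCommGroup X] [Module Γ X] [AddCommGroup Y] [Module Γ Y]
  [AddCommGroup Z] [Module Γ Z] [AddCommGroup M] [Module Γ M]

/-- From a section to a retraction. -/
lemma retraction_of_section (i : Y →ₗ[Γ] E) (p : E →ₗ[Γ] X)
    (hi : Function.Injective i) (hex : Function.Exact i p)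
    (s : X →ₗ[Γ] E) (hs : ∀ x, p (s x) = x) : ∃ r : E →ₗ[Γ] Y, ∀ y, r (i y) = y := by
  have h0 : ∀ e, e - s (p e) ∈ LinearMap.range i := by
    intro e
    have : p (e - s (p e)) = 0 := by simp [hs]
    exact (hex _).1 this
  let eq := LinearEquiv.ofInjective i hi
  let q : E →ₗ[Γ] LinearMap.range i := LinearMap.codRestrict _ (LinearMap.id - s ∘ₗ p) h0
  refine ⟨eq.symm.toLinearMap ∘ₗ q, fun y => ?_⟩
  have hp : p (i y) = 0 := (hex _).2 ⟨y, rfl⟩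
  have : q (i y) = eq y := by
    apply Subtype.ext
    simp [q, eq, hp]
  simp [this]

/-- From a retraction to a section. -/
lemma section_of_retraction (i : Y →ₗ[Γ] E) (p : E →ₗ[Γ] X)
    (hp : Function.Surjective p) (hex : Function.Exact i p)
    (r : E →ₗ[Γ] Y) (hr : ∀ y, r (i y) = y) : ∃ s : X →ₗ[Γ] E, ∀ x, p (s x) = x := by
  have hle : LinearMap.ker p ≤ LinearMap.ker (LinearMap.id - i ∘ₗ r) := by
    intro e he
    obtain ⟨y, rfl⟩ := (hex e).1 he
    simp [hr]
  let eq := p.quotKerEquivOfSurjective hp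
  refine ⟨(LinearMap.ker p).liftQ _ hle ∘ₗ eq.symm.toLinearMap, fun x => ?_⟩
  obtain ⟨e, rfl⟩ := hp x
  have h1 : eq.symm (p e) = (LinearMap.ker p).mkQ e := by
    rw [LinearEquiv.symm_apply_eq]; rfl
  have h2 : p (i (r e)) = 0 := (hex _).2 ⟨_, rfl⟩
  simp [h1, h2]

/-- Descending along a surjection. -/
lemma exists_desc (p : E →ₗ[Γ] X) (hp : Function.Surjective p) (f : E →ₗ[Γ] Z)
    (hf : ∀ e, p e = 0 → f e = 0) : ∃ g : X →ₗ[Γ] Z, ∀ e, g (p e) = f e := by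
  have hle : LinearMap.ker p ≤ LinearMap.ker f := fun e he => hf e he
  let eq := p.quotKerEquivOfSurjective hp
  refine ⟨(LinearMap.ker p).liftQ f hle ∘ₗ eq.symm.toLinearMap, fun e => ?_⟩
  have h1 : eq.symm (p e) = (LinearMap.ker p).mkQ e := by
    rw [LinearEquiv.symm_apply_eq]; rfl
  simp [h1]

/-- Lifting along an injection. -/
lemma exists_lift_inj (i : Y →ₗ[Γ] E) (hi : Function.Injective i) (f : Z →ₗ[Γ] E)
    (hf : ∀ z, ∃ y, i y = f z) : ∃ g : Z →ₗ[Γ] Y, ∀ z, i (g z) = f z := by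
  let eq := LinearEquiv.ofInjective i hi
  refine ⟨eq.symm.toLinearMap ∘ₗ LinearMap.codRestrict (LinearMap.range i) f (fun z => hf z),
    fun z => ?_⟩
  have : ∀ w : LinearMap.range i, i (eq.symm w) = w := by
    intro w
    exact congrArg Subtype.val (eq.apply_symm_apply w)
  exact this _

/-- Pushouts of modules. -/
lemma exists_pushout (u : A →ₗ[Γ] B) (v : A →ₗ[Γ] C) :
    ∃ (P : Type) (_ : AddCommGroup P) (_ : Module Γ P) (b : B →ₗ[Γ] P) (c : C →ₗ[Γ] P),
      (∀ e, ∃ x y, e = b x + c y) ∧ (∀ a, b (u a) = c (v a)) ∧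
      (∀ x y, b x = c y → ∃ a, x = u a ∧ y = v a) ∧
      (∀ (Z : Type) [AddCommGroup Z] [Module Γ Z] (f : B →ₗ[Γ] Z) (g : C →ₗ[Γ] Z),
        (∀ a, f (u a) = g (v a)) → ∃ h : P →ₗ[Γ] Z, (∀ x, h (b x) = f x) ∧
          ∀ y, h (c y) = g y) := by
  let N : Submodule Γ (B × C) := LinearMap.range (u.prod (-v))
  refine ⟨(B × C) ⧸ N, inferInstance, inferInstance, N.mkQ ∘ₗ LinearMap.inl Γ B C,
    N.mkQ ∘ₗ LinearMap.inr Γ B C, ?_, ?_, ?_, ?_⟩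
  · intro e
    obtain ⟨⟨x, y⟩, rfl⟩ := N.mkQ_surjective e
    refine ⟨x, y, ?_⟩
    simp only [LinearMap.comp_apply, ← map_add]
    simp
  · intro a
    simp only [LinearMap.comp_apply]
    rw [← sub_eq_zero, ← map_sub, Submodule.mkQ_apply, Submodule.Quotient.mk_eq_zero]
    exact ⟨a, by simp⟩
  · intro x y h
    simp only [LinearMap.comp_apply] at h
    rw [← sub_eq_zero, ← map_sub, Submodule.mkQ_apply, Submodule.Quotient.mk_eq_zero] at h
    obtain ⟨a, ha⟩ := h
    simp at ha
    exact ⟨a, ha.1.symm, ha.2.symm⟩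
  · intro Z _ _ f g hfg
    refine ⟨N.liftQ (f.coprod g) ?_, ?_, ?_⟩
    · rintro _ ⟨a, rfl⟩
      simp [hfg]
    · intro x; simp
    · intro y; simp

/-- Extension of maps along exact sequences with end term `X`. -/
lemma Spl.extend (h : Spl Γ X Y) (i : A →ₗ[Γ] B) (p : B →ₗ[Γ] X)
    (hp : Function.Surjective p) (hex : Function.Exact i p) (g : A →ₗ[Γ] Y)
    (hg : ∀ a, i a = 0 → g a = 0) : ∃ k : B →ₗ[Γ] Y, ∀ a, k (i a) = g a := by
  obtain ⟨P, _, _, b, c, hsurj, hcomm, heq, huniv⟩ := exists_pushout g i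
  obtain ⟨q, hq1, hq2⟩ := huniv X 0 p (fun a => by simp [hex.apply_apply_eq_zero])
  have hb : Function.Injective b := by
    rw [injective_iff_map_eq_zero]
    intro x hx
    obtain ⟨a, rfl, ha⟩ := heq x 0 (by simpa using hx)
    exact hg a ha.symm
  have hqs : Function.Surjective q := fun x => by
    obtain ⟨y, rfl⟩ := hp x
    exact ⟨c y, hq2 y⟩
  have hexq : Function.Exact b q := by
    intro e
    constructor
    · intro he
      obtain ⟨x, y, rfl⟩ := hsurj e
      rw [map_add, hq1, hq2] at he
      obtain ⟨a, rfl⟩ := (hex y).1 (by simpa using he)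
      exact ⟨x + g a, by rw [map_add, hcomm]⟩
    · rintro ⟨x, rfl⟩
      simp [hq1]
  obtain ⟨s, hs⟩ := h P b q hb hqs hexq
  obtain ⟨r, hr⟩ := retraction_of_section b q hb hexq s hs
  exact ⟨r ∘ₗ c, fun a => by simp [← hcomm, hr]⟩

/-- Lifting of maps along exact sequences with first term `Y`. -/
lemma Spl.lift (h : Spl Γ X Y) (i : Y →ₗ[Γ] B) (p : B →ₗ[Γ] C)
    (hi : Function.Injective i) (hp : Function.Surjective p) (hex : Function.Exact i p)
    (g : X →ₗ[Γ] C) : ∃ k : X →ₗ[Γ] B, ∀ x, p (k x) = g x := by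
  let P : Submodule Γ (B × X) :=
    LinearMap.ker (p ∘ₗ LinearMap.fst Γ B X - g ∘ₗ LinearMap.snd Γ B X)
  have hP : ∀ z, z ∈ P ↔ p z.1 = g z.2 := fun z => by simp [P, sub_eq_zero]
  let i' : Y →ₗ[Γ] P := LinearMap.codRestrict P (LinearMap.inl Γ B X ∘ₗ i)
    (fun y => by simp [hP, hex.apply_apply_eq_zero])
  let q : P →ₗ[Γ] X := LinearMap.snd Γ B X ∘ₗ P.subtype
  obtain ⟨s, hs⟩ := h P i' q
    (fun y y' hyy => hi (congrArg (fun z : P => z.1.1) hyy))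
    (fun x => by
      obtain ⟨b, hb⟩ := hp (g x)
      exact ⟨⟨(b, x), (hP _).2 hb⟩, rfl⟩)
    (by
      rintro ⟨⟨b, x⟩, hz⟩
      constructor
      · intro h0
        have h0' : x = 0 := h0
        subst h0'
        have := (hP _).1 hz
        obtain ⟨y, rfl⟩ := (hex b).1 (by simpa using this)
        exact ⟨y, rfl⟩
      · rintro ⟨y, hy⟩
        rw [← hy]; rfl)
  refine ⟨LinearMap.fst Γ B X ∘ₗ P.subtype ∘ₗ s, fun x => ?_⟩
  have h1 := (hP _).1 (s x).2
  have h2 : (s x).1.2 = x := hs x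
  rw [h2] at h1
  exact h1

lemma Spl.ext_left (i : A →ₗ[Γ] B) (p : B →ₗ[Γ] C) (hi : Function.Injective i)
    (hp : Function.Surjective p) (hex : Function.Exact i p)
    (hA : Spl Γ A Y) (hC : Spl Γ C Y) : Spl Γ B Y := by
  intro E _ _ j q hj hq hjq
  obtain ⟨s, hs⟩ := hA.lift j q hj hq hjq i
  let N := LinearMap.range s
  obtain ⟨t, ht⟩ := exists_desc N.mkQ N.mkQ_surjective (p ∘ₗ q) (by
    intro e he
    rw [Submodule.mkQ_apply, Submodule.Quotient.mk_eq_zero] at he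
    obtain ⟨a, rfl⟩ := he
    simp [hs, hex.apply_apply_eq_zero])
  have hinj : Function.Injective (N.mkQ ∘ₗ j) := by
    rw [injective_iff_map_eq_zero]
    intro y hy
    rw [LinearMap.comp_apply, Submodule.mkQ_apply, Submodule.Quotient.mk_eq_zero] at hy
    obtain ⟨a, ha⟩ := hy
    have h1 : q (s a) = 0 := by rw [ha, hjq.apply_apply_eq_zero]
    rw [hs] at h1
    have h2 : a = 0 := hi (by simpa using h1)
    subst h2
    exact hj (by simpa using ha.symm)
  have hexq : Function.Exact (N.mkQ ∘ₗ j) t := by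
    intro e
    obtain ⟨e, rfl⟩ := N.mkQ_surjective e
    constructor
    · intro he
      rw [ht] at he
      obtain ⟨a, ha⟩ := (hex _).1 he
      obtain ⟨y, hy⟩ := (hjq (e - s a)).1 (by simp [hs, ha])
      refine ⟨y, ?_⟩
      rw [LinearMap.comp_apply, hy, map_sub, sub_eq_self, Submodule.mkQ_apply,
        Submodule.Quotient.mk_eq_zero]
      exact ⟨a, rfl⟩
    · rintro ⟨y, hy⟩
      rw [← hy, LinearMap.comp_apply, ht]
      simp [hjq.apply_apply_eq_zero]
  have hts : Function.Surjective t := by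
    intro c
    obtain ⟨b, rfl⟩ := hp c
    obtain ⟨e, rfl⟩ := hq b
    exact ⟨N.mkQ e, ht e⟩
  obtain ⟨w, hw⟩ := hC _ (N.mkQ ∘ₗ j) t hinj hts hexq
  obtain ⟨r, hr⟩ := retraction_of_section _ t hinj hexq w hw
  exact section_of_retraction j q hq hjq (r ∘ₗ N.mkQ) (fun y => hr y)

lemma Spl.ext_right (i : A →ₗ[Γ] B) (p : B →ₗ[Γ] C) (hi : Function.Injective i)
    (hp : Function.Surjective p) (hex : Function.Exact i p)
    (hA : Spl Γ X A) (hC : Spl Γ X C) : Spl Γ X B := by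
  intro E _ _ j q hj hq hjq
  obtain ⟨u, hu⟩ := hC.extend j q hq hjq p (fun b hb => by
    rw [hj (by simpa using hb : j b = j 0), map_zero])
  let K := LinearMap.ker u
  let i' : A →ₗ[Γ] K := LinearMap.codRestrict K (j ∘ₗ i) (fun a => by
    simp [K, hu, hex.apply_apply_eq_zero])
  obtain ⟨s, hs⟩ := hA K i' (q ∘ₗ K.subtype)
    (fun a a' h => hi (hj (congrArg Subtype.val h)))
    (fun x => by
      obtain ⟨e, rfl⟩ := hq x
      obtain ⟨b, hb⟩ := hp (u e)
      refine ⟨⟨e - j b, by simp [K, hu, hb]⟩, ?_⟩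
      simp [hjq.apply_apply_eq_zero])
    (by
      rintro ⟨e, he⟩
      constructor
      · intro h0
        obtain ⟨b, rfl⟩ := (hjq e).1 h0
        have : p b = 0 := by rw [← hu]; exact he
        obtain ⟨a, rfl⟩ := (hex b).1 this
        exact ⟨a, rfl⟩
      · rintro ⟨a, ha⟩
        rw [← ha]
        exact hjq.apply_apply_eq_zero _)
  exact ⟨K.subtype ∘ₗ s, hs⟩

lemma Spl.retract_left (h : Spl Γ X Y) (i : A →ₗ[Γ] X) (r : X →ₗ[Γ] A)
    (hr : ∀ a, r (i a) = a) : Spl Γ A Y := by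
  intro E _ _ j q hj hq hjq
  obtain ⟨k, hk⟩ := h.lift j q hj hq hjq r
  exact ⟨k ∘ₗ i, fun a => by simp [hk, hr]⟩

lemma Spl.retract_right (h : Spl Γ X Y) (i : A →ₗ[Γ] Y) (r : Y →ₗ[Γ] A)
    (hr : ∀ a, r (i a) = a) : Spl Γ X A := by
  intro E _ _ j q hj hq hjq
  obtain ⟨k, hk⟩ := h.extend j q hq hjq i (fun b hb => by
    rw [hj (by simpa using hb : j b = j 0), map_zero])
  exact section_of_retraction j q hq hjq (r ∘ₗ k) (fun a => by simp [hk, hr])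

lemma Spl.of_projective [Module.Projective Γ X] : Spl Γ X Y := by
  intro E _ _ j q hj hq hjq
  obtain ⟨s, hs⟩ := Module.projective_lifting_property q LinearMap.id hq
  exact ⟨s, fun x => LinearMap.congr_fun hs x⟩

lemma Spl.of_injective (hY : Module.Injective Γ Y) : Spl Γ X Y := by
  intro E _ _ j q hj hq hjq
  obtain ⟨r, hr⟩ := hY.out j hj LinearMap.id
  exact section_of_retraction j q hq hjq r hr

lemma finite_of_exact [IsNoetherianRing Γ] (i : A →ₗ[Γ] B) (p : B →ₗ[Γ] C)
    (hex : Function.Exact i p) [Module.Finite Γ A] [Module.Finite Γ C] : Module.Finite Γ B := by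
  have := isNoetherian_of_range_eq_ker i p (LinearMap.exact_iff.1 hex).symm
  infer_instance

/-- Fitting: a non-surjective endomorphism has a power whose range is a proper summand. -/
lemma fitting [IsArtinianRing Γ] [Module.Finite Γ X] (g : X →ₗ[Γ] X)
    (hg : ¬ Function.Bijective g) : ∃ n : ℕ, ∃ r : X →ₗ[Γ] LinearMap.range (g ^ n),
      (∀ x : LinearMap.range (g ^ n), r x = x) ∧ LinearMap.range (g ^ n) ≠ ⊤ := by
  have hev := LinearMap.eventually_isCompl_ker_pow_range_pow g
  obtain ⟨n, hn, hn1⟩ := (hev.and (Filter.eventually_ge_atTop 1)).exists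
  refine ⟨n, Submodule.projectionOnto _ _ hn.symm, fun x => ?_, fun htop => hg ?_⟩
  · exact Submodule.projectionOnto_apply_left hn.symm x
  · have hs : Function.Surjective g := by
      intro x
      have : x ∈ LinearMap.range (g ^ n) := htop ▸ Submodule.mem_top
      obtain ⟨y, rfl⟩ := this
      obtain ⟨m, rfl⟩ := Nat.exists_eq_add_of_le' hn1
      exact ⟨(g ^ m) y, by rw [pow_succ']; rfl⟩
    exact ⟨IsNoetherian.injective_of_surjective_endomorphism g hs, hs⟩

end Elementary

section Bridge

variable {Γ : Type} [Ring Γ]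

lemma ext_one_iff (X Y : ModuleCat.{0} Γ) :
    Subsingleton (extGrp Γ 1 X Y) ↔ Spl Γ X Y := by
  let P : ProjectiveResolution X := projectiveResolution X
  have e := P.isoExt (R := ℤ) 1 Y
  have h1 : Subsingleton (extGrp Γ 1 X Y) ↔
      ∀ g : P.complex.X 1 ⟶ Y, P.complex.d 2 1 ≫ g = 0 →
        ∃ h : P.complex.X 0 ⟶ Y, P.complex.d 1 0 ≫ h = g := by
    rw [← ModuleCat.isZero_iff_subsingleton, e.isZero_iff,
      ← HomologicalComplex.exactAt_iff_isZero_homology,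
      HomologicalComplex.exactAt_iff' _ 0 1 2 (by simp) (by simp),
      ShortComplex.moduleCat_exact_iff]
    rfl
  rw [h1]
  obtain ⟨π, hπ, hex0⟩ : ∃ π : P.complex.X 0 ⟶ X, Function.Surjective π.hom ∧
      Function.Exact (P.complex.d 1 0).hom π.hom := by
    refine ⟨P.π.f 0, (ModuleCat.epi_iff_surjective (P.π.f 0)).1 inferInstance, ?_⟩
    exact (ShortComplex.ShortExact.moduleCat_exact_iff_function_exact _).1 P.exact₀
  have hex1 : Function.Exact (P.complex.d 2 1).hom (P.complex.d 1 0).hom :=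
    (ShortComplex.ShortExact.moduleCat_exact_iff_function_exact _).1 (P.exact_succ 0)
  constructor
  · intro H E _ _ i p hi hp hip
    have hproj : Module.Projective Γ (P.complex.X 0) :=
      (IsProjective.iff_projective _).2 (P.projective 0)
    obtain ⟨φ, hφ⟩ := Module.projective_lifting_property p π.hom hp
    have hφ' : ∀ x, p (φ x) = π.hom x := fun x => LinearMap.congr_fun hφ x
    obtain ⟨g, hg⟩ := exists_lift_inj i hi (φ ∘ₗ (P.complex.d 1 0).hom) (fun z =>
      (hip _).1 (by
        rw [LinearMap.comp_apply, hφ']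
        exact hex0.apply_apply_eq_zero z))
    obtain ⟨h, hh⟩ := H (ModuleCat.ofHom g) (by
      ext z
      apply hi
      change i (g ((P.complex.d 2 1).hom z)) = i 0
      rw [hg, LinearMap.comp_apply, hex1.apply_apply_eq_zero, map_zero, map_zero])
    have hh' : ∀ z, h.hom ((P.complex.d 1 0).hom z) = g z := fun z =>
      LinearMap.congr_fun (congrArg ModuleCat.Hom.hom hh) z
    obtain ⟨s, hs⟩ := exists_desc π.hom hπ (φ - i ∘ₗ h.hom) (fun e he => by
      obtain ⟨z, rfl⟩ := (hex0 e).1 he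
      simp only [LinearMap.sub_apply, LinearMap.comp_apply, hh', hg, sub_self])
    refine ⟨s, fun x => ?_⟩
    obtain ⟨e, rfl⟩ := hπ x
    rw [hs, LinearMap.sub_apply, map_sub, hφ', LinearMap.comp_apply, hip.apply_apply_eq_zero,
      sub_zero]
  · intro H g hg
    obtain ⟨k, hk⟩ := H.extend (P.complex.d 1 0).hom π.hom hπ hex0 g.hom (fun a ha => by
      obtain ⟨z, rfl⟩ := (hex1 a).1 ha
      exact LinearMap.congr_fun (congrArg ModuleCat.Hom.hom hg) z)
    exact ⟨ModuleCat.ofHom k, by ext z; exact hk z⟩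

end Bridge

section Hull

/-- Existence of injective hulls (internal form). -/
lemma exists_essential_injective {Γ : Type} [Ring Γ] (M : Type) [AddCommGroup M] [Module Γ M] :
    ∃ (E : Type) (_ : AddCommGroup E) (_ : Module Γ E) (j : M →ₗ[Γ] E),
      Function.Injective j ∧ Module.Injective Γ E ∧
      ∀ N : Submodule Γ E, N ⊓ LinearMap.range j = ⊥ → N = ⊥ := by
  obtain ⟨⟨J, hJ, f, hf⟩⟩ := EnoughInjectives.presentation (ModuleCat.of Γ M)
  have hJ' : Module.Injective Γ J := (Module.injective_iff_injective_object Γ J).2 hJ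
  have hfi : Function.Injective f.hom := (ModuleCat.mono_iff_injective f).1 hf
  let M' : Submodule Γ J := LinearMap.range f.hom
  -- essential extensions of `M'` inside `J`
  let S : Set (Submodule Γ J) := {E | M' ≤ E ∧ ∀ N ≤ E, N ⊓ M' = ⊥ → N = ⊥}
  obtain ⟨E, hME, hE⟩ : ∃ E, M' ≤ E ∧ Maximal (· ∈ S) E := by
    refine zorn_le_nonempty₀ S ?_ M' ⟨le_rfl, fun N hN h => by rwa [inf_eq_left.2 hN] at h⟩
    intro c hc hchain y hy
    refine ⟨sSup c, ⟨(hc hy).1.trans (le_sSup hy), ?_⟩, fun z hz => le_sSup hz⟩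
    intro N hN h
    rw [Submodule.eq_bot_iff]
    intro x hx
    obtain ⟨E, hEc, hxE⟩ := (Submodule.mem_sSup_of_directed ⟨y, hy⟩ hchain.directedOn).1 (hN hx)
    have := (hc hEc).2 (N ⊓ E) inf_le_right (by
      rw [eq_bot_iff, ← h]
      exact inf_le_inf_right _ inf_le_left)
    exact (Submodule.eq_bot_iff _).1 this x ⟨hx, hxE⟩
  -- a maximal complement
  obtain ⟨C, -, hC⟩ : ∃ C, ⊥ ≤ C ∧ Maximal (· ∈ {C : Submodule Γ J | C ⊓ E = ⊥}) C := by
    refine zorn_le_nonempty₀ {C : Submodule Γ J | C ⊓ E = ⊥} ?_ ⊥ (bot_inf_eq _)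
    intro c hc hchain y hy
    refine ⟨sSup c, ?_, fun z hz => le_sSup hz⟩
    rw [Set.mem_ofPred_eq, Submodule.eq_bot_iff]
    rintro x ⟨hx, hxE⟩
    obtain ⟨D, hDc, hxD⟩ := (Submodule.mem_sSup_of_directed ⟨y, hy⟩ hchain.directedOn).1 hx
    exact (Submodule.eq_bot_iff _).1 (hc hDc) x ⟨hxD, hxE⟩
  have hCE : C ⊓ E = ⊥ := hC.prop
  have hinj : Function.Injective (C.mkQ ∘ₗ E.subtype) := by
    rw [injective_iff_map_eq_zero]
    rintro ⟨x, hx⟩ h0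
    rw [LinearMap.comp_apply, Submodule.mkQ_apply, Submodule.Quotient.mk_eq_zero] at h0
    exact Subtype.ext ((Submodule.eq_bot_iff _).1 hCE x ⟨h0, hx⟩)
  obtain ⟨k, hk⟩ := hJ'.out (C.mkQ ∘ₗ E.subtype) hinj E.subtype
  -- `k` has trivial kernel
  have hker : LinearMap.ker (k ∘ₗ C.mkQ) = C := by
    refine (hC.eq_of_le ?_ ?_).symm
    · rw [Set.mem_ofPred_eq, Submodule.eq_bot_iff]
      rintro x ⟨hx, hxE⟩
      have := hk ⟨x, hxE⟩
      exact this.symm.trans hx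
    · intro x hx
      have : C.mkQ x = 0 := by simpa using hx
      simp [LinearMap.mem_ker, LinearMap.comp_apply, this]
  have hrange : E = LinearMap.range (k ∘ₗ C.mkQ) := by
    have hle : E ≤ LinearMap.range (k ∘ₗ C.mkQ) := fun x hx => ⟨x, hk ⟨x, hx⟩⟩
    refine hE.eq_of_le ⟨hME.trans hle, ?_⟩ hle
    intro N hN h
    have h1 : N ⊓ E = ⊥ := hE.prop.2 _ inf_le_right (by
      rw [eq_bot_iff, ← h]; exact inf_le_inf_right _ inf_le_left)
    have h2 : N.comap (k ∘ₗ C.mkQ) = C := by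
      refine (hC.eq_of_le ?_ ?_).symm
      · rw [Set.mem_ofPred_eq, Submodule.eq_bot_iff]
        rintro x ⟨hx, hxE⟩
        have h3 : (k ∘ₗ C.mkQ) x = x := hk ⟨x, hxE⟩
        rw [SetLike.mem_coe, Submodule.mem_comap, h3] at hx
        exact (Submodule.eq_bot_iff _).1 h1 x ⟨hx, hxE⟩
      · intro x hx
        rw [← hker, LinearMap.mem_ker] at hx
        rw [Submodule.mem_comap, hx]
        exact N.zero_mem
    rw [Submodule.eq_bot_iff]
    intro x hx
    obtain ⟨y, rfl⟩ := hN hx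
    have : y ∈ C := h2 ▸ (Submodule.mem_comap.2 hx)
    rw [← hker] at this
    exact this
  let r : J →ₗ[Γ] E := LinearMap.codRestrict E (k ∘ₗ C.mkQ) (fun x => by
    rw [hrange]; exact ⟨x, rfl⟩)
  have hr : ∀ x : E, r x = x := fun x => Subtype.ext (hk x)
  refine ⟨E, inferInstance, inferInstance,
    LinearMap.codRestrict E f.hom (fun x => hME ⟨x, rfl⟩), ?_, ?_, ?_⟩
  · intro x y hxy
    exact hfi (congrArg Subtype.val hxy)
  · refine ⟨fun A B _ _ _ _ i hi g => ?_⟩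
    obtain ⟨h, hh⟩ := hJ'.out i hi (E.subtype ∘ₗ g)
    refine ⟨r ∘ₗ h, fun x => ?_⟩
    rw [LinearMap.comp_apply, hh]
    exact hr _
  · intro N hN
    have : N.map E.subtype = ⊥ := hE.prop.2 _ (Submodule.map_subtype_le _ _) (by
      rw [Submodule.eq_bot_iff]
      rintro _ ⟨⟨x, hx, rfl⟩, ⟨m, hm⟩⟩
      have : x ∈ N ⊓ LinearMap.range
          (LinearMap.codRestrict E f.hom (fun x => hME ⟨x, rfl⟩)) :=
        ⟨hx, m, Subtype.ext hm⟩
      rw [hN] at this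
      rw [(Submodule.mem_bot _).1 this]; rfl)
    rw [Submodule.eq_bot_iff] at this ⊢
    intro x hx
    exact Subtype.ext (this x ⟨x, hx, rfl⟩)

/-- The socle filtration. -/
def socF (Γ : Type) [Ring Γ] (E : Type) [AddCommGroup E] [Module Γ E] : ℕ → Submodule Γ E
  | 0 => ⊥
  | n + 1 =>
    { carrier := {x | ∀ a ∈ Ring.jacobson Γ, a • x ∈ socF Γ E n}
      add_mem' := fun hx hy a ha => by
        rw [smul_add]; exact Submodule.add_mem _ (hx a ha) (hy a ha)
      zero_mem' := fun a _ => by rw [smul_zero]; exact Submodule.zero_mem _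
      smul_mem' := fun c x hx a ha => by
        rw [← mul_smul]
        exact hx _ (Ideal.mul_mem_right _ _ ha) }

lemma mem_socF_succ {Γ E : Type} [Ring Γ] [AddCommGroup E] [Module Γ E] (n : ℕ) (x : E) :
    x ∈ socF Γ E (n + 1) ↔ ∀ a ∈ Ring.jacobson Γ, a • x ∈ socF Γ E n := Iff.rfl

lemma mem_socF_of_pow {Γ E : Type} [Ring Γ] [AddCommGroup E] [Module Γ E] (n : ℕ) :
    ∀ x : E, (∀ a ∈ Ring.jacobson Γ ^ n, a • x = 0) → x ∈ socF Γ E n := by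
  induction n with
  | zero =>
    intro x hx
    have := hx 1 (by rw [Submodule.pow_zero, Ideal.one_eq_top]; trivial)
    rw [one_smul] at this
    exact (Submodule.mem_bot _).2 this
  | succ n ih =>
    intro x hx a ha
    refine ih _ fun b hb => ?_
    rw [← mul_smul]
    exact hx _ (by rw [Submodule.pow_succ]; exact Ideal.mul_mem_mul hb ha)

lemma finite_essential (R : Type) [CommRing R] [IsArtinianRing R]
    (Γ : Type) [Ring Γ] [Algebra R Γ] [Module.Finite R Γ]
    (M : Type) [AddCommGroup M] [Module Γ M] [Module.Finite Γ M]
    (E : Type) [AddCommGroup E] [Module Γ E] (j : M →ₗ[Γ] E)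
    (hess : ∀ N : Submodule Γ E, N ⊓ LinearMap.range j = ⊥ → N = ⊥) : Module.Finite Γ E := by
  have hart : IsArtinianRing Γ := IsArtinianRing.of_finite R Γ
  let : Module R E := Module.compHom E (algebraMap R Γ)
  let : Module R M := Module.compHom M (algebraMap R Γ)
  have : IsScalarTower R Γ E := ⟨fun r g x => by
    rw [Algebra.smul_def, mul_smul]; rfl⟩
  have : IsScalarTower R Γ M := ⟨fun r g x => by
    rw [Algebra.smul_def, mul_smul]; rfl⟩
  have : Module.Finite R M := Module.Finite.trans Γ M
  have : SMulCommClass Γ R E := ⟨fun g r x => by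
    change g • (algebraMap R Γ r • x) = algebraMap R Γ r • (g • x)
    rw [← mul_smul, ← mul_smul, Algebra.commutes]⟩
  -- the first layer
  have hss : IsSemisimpleModule Γ (socF Γ E 1) := by
    have ht : Module.IsTorsionBySet Γ (socF Γ E 1) (Ring.jacobson Γ : Set Γ) := by
      rintro ⟨x, hx⟩ ⟨a, ha⟩
      exact Subtype.ext ((Submodule.mem_bot _).1 (hx a ha))
    rw [← ht.isSemisimpleModule_iff]
    let := ht.module
    infer_instance
  have h1 : socF Γ E 1 ≤ LinearMap.range j := by
    obtain ⟨N, hN⟩ := exists_isCompl ((LinearMap.range j).comap (socF Γ E 1).subtype)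
    have hN0 : N = ⊥ := by
      have := hess (N.map (socF Γ E 1).subtype) (by
        rw [Submodule.eq_bot_iff]
        rintro _ ⟨⟨x, hx, rfl⟩, hm⟩
        have : x ∈ (LinearMap.range j).comap (socF Γ E 1).subtype ⊓ N := ⟨hm, hx⟩
        rw [hN.inf_eq_bot] at this
        rw [(Submodule.mem_bot _).1 this]; rfl)
      rw [Submodule.eq_bot_iff] at this ⊢
      intro x hx
      exact Subtype.ext (this x ⟨x, hx, rfl⟩)
    have htop := hN.sup_eq_top
    rw [hN0, sup_bot_eq] at htop
    intro x hx
    have : (⟨x, hx⟩ : socF Γ E 1) ∈ (LinearMap.range j).comap (socF Γ E 1).subtype :=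
      htop ▸ Submodule.mem_top
    exact this
  have hfin1 : IsNoetherian R ((socF Γ E 1).restrictScalars R) := by
    have h2 : (socF Γ E 1).restrictScalars R ≤ LinearMap.range (j.restrictScalars R) := h1
    exact isNoetherian_of_le h2
  obtain ⟨s, hs⟩ := (inferInstance : IsNoetherianRing Γ).noetherian (Ring.jacobson Γ)
  have hstep : ∀ n, IsNoetherian R ((socF Γ E n).restrictScalars R) := by
    intro n
    induction n with
    | zero =>
      have : (socF Γ E 0).restrictScalars R ≤ (socF Γ E 1).restrictScalars R := by
        intro x hx
        rw [(Submodule.mem_bot _).1 hx]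
        exact Submodule.zero_mem _
      exact isNoetherian_of_le this
    | succ n ih =>
      let φ : (socF Γ E (n + 1)).restrictScalars R →ₗ[R] (s → (socF Γ E n).restrictScalars R) :=
        LinearMap.pi fun a => LinearMap.codRestrict _
          ((DistribSMul.toLinearMap R E (a : Γ)) ∘ₗ
            ((socF Γ E (n + 1)).restrictScalars R).subtype)
          (fun x => x.2 a (hs ▸ Submodule.subset_span a.2))
      let ψ : (LinearMap.ker φ) →ₗ[R] (socF Γ E 1).restrictScalars R :=
        LinearMap.codRestrict _ (((socF Γ E (n + 1)).restrictScalars R).subtype ∘ₗ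
          (LinearMap.ker φ).subtype) (by
          rintro ⟨⟨x, hx⟩, hx0⟩
          have hx1 : ∀ a ∈ s, a • x = 0 := fun a ha =>
            congrArg Subtype.val (congrFun (show φ ⟨x, hx⟩ = 0 from hx0) ⟨a, ha⟩)
          intro a ha
          refine (Submodule.mem_bot _).2 ?_
          change a • x = 0
          rw [← hs] at ha
          have : Submodule.span Γ (s : Set Γ) ≤ LinearMap.ker (LinearMap.toSpanSingleton Γ E x) :=
            Submodule.span_le.2 fun b hb => by simpa using hx1 b hb
          simpa using this ha)
      have hψ : Function.Injective ψ := by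
        intro x y hxy
        exact Subtype.ext (Subtype.ext (congrArg (fun z : (socF Γ E 1).restrictScalars R => (z : E)) hxy))
      have : IsNoetherian R (LinearMap.ker φ) := isNoetherian_of_injective ψ hψ
      exact isNoetherian_of_range_eq_ker (LinearMap.ker φ).subtype φ (by simp)
  obtain ⟨n, hn⟩ := (IsSemiprimaryRing.isNilpotent : IsNilpotent (Ring.jacobson Γ))
  have htop : (socF Γ E n).restrictScalars R = ⊤ := by
    rw [eq_top_iff]
    intro x _
    refine mem_socF_of_pow n x fun a ha => ?_
    rw [hn] at ha
    rw [show a = 0 from ha, zero_smul]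
  have := hstep n
  rw [htop] at this
  have hE : IsNoetherian R E := isNoetherian_top_iff.1 this
  exact Module.Finite.of_restrictScalars_finite R Γ E

lemma exists_fg_injective (R : Type) [CommRing R] [IsArtinianRing R]
    (Γ : Type) [Ring Γ] [Algebra R Γ] [Module.Finite R Γ]
    (M : Type) [AddCommGroup M] [Module Γ M] [Module.Finite Γ M] :
    ∃ (E : Type) (_ : AddCommGroup E) (_ : Module Γ E) (j : M →ₗ[Γ] E),
      Function.Injective j ∧ Module.Injective Γ E ∧ Module.Finite Γ E := by
  obtain ⟨E, _, _, j, hj, hE, hess⟩ := exists_essential_injective (Γ := Γ) M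
  exact ⟨E, _, _, j, hj, hE, finite_essential R Γ M E j hess⟩

end Hull

section Approx

variable {Γ : Type} [Ring Γ] [IsArtinianRing Γ] {𝒳 𝒴 : Set (ModuleCat.{0} Γ)}

/-- Choosing an object of minimal measure. -/
lemma measure_wf_exists {α : Type*} (μ : α → ℕ∞) (p : α → Prop) (h : ∃ a, p a) :
    ∃ a, p a ∧ ∀ b, p b → ¬ μ b < μ a := by
  obtain ⟨a, ha, hmin⟩ := (InvImage.wf μ (wellFounded_lt (α := ℕ∞))).has_min {a | p a} h
  exact ⟨a, ha, fun b hb hlt => hmin b hb hlt⟩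

/-- Wakamatsu's lemma for right approximations. -/
lemma special_right
    (hX : ∀ X : ModuleCat.{0} Γ, X ∈ 𝒳 ↔ Module.Finite Γ X ∧ ∀ Y ∈ 𝒴, Spl Γ X Y)
    (happ : ∀ M ∈ fgMod Γ, ∃ (X : ModuleCat.{0} Γ) (f : X ⟶ M), IsRightApprox 𝒳 f)
    (M : ModuleCat.{0} Γ) (hM : Module.Finite Γ M) :
    ∃ X ∈ 𝒳, ∃ f : X →ₗ[Γ] M, Function.Surjective f ∧
      ∀ X' ∈ 𝒳, Spl Γ X' (LinearMap.ker f) := by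
  -- choose an approximation of minimal length
  obtain ⟨X, ⟨f, hXm, happf⟩, hmin⟩ := (measure_wf_exists (fun X : ModuleCat.{0} Γ =>
    Module.length Γ X) (fun X => ∃ f : X ⟶ M, IsRightApprox 𝒳 f) (happ M hM))
  have hXfin : Module.Finite Γ X := ((hX X).1 hXm).1
  have hbij : ∀ g : X →ₗ[Γ] X, (∀ x, f.hom (g x) = f.hom x) → Function.Bijective g := by
    intro g hg
    by_contra hnb
    obtain ⟨n, r, hr, hne⟩ := fitting g hnb
    have hgn : ∀ n : ℕ, ∀ x, f.hom ((g ^ n) x) = f.hom x := by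
      intro n
      induction n with
      | zero => intro x; rfl
      | succ n ih => intro x; rw [pow_succ]; exact (ih _).trans (hg x)
    refine hmin (ModuleCat.of Γ (LinearMap.range (g ^ n)))
      ⟨ModuleCat.ofHom (f.hom ∘ₗ (LinearMap.range (g ^ n)).subtype), ?_, ?_⟩
      (Submodule.length_lt hne)
    · rw [hX]
      exact ⟨Module.Finite.range _, fun Y hY => (((hX X).1 hXm).2 Y hY).retract_left
        (LinearMap.range (g ^ n)).subtype r hr⟩
    · intro C hC t
      obtain ⟨h, hh⟩ := happf C hC t
      refine ⟨ModuleCat.ofHom ((g ^ n).rangeRestrict ∘ₗ h.hom), ?_⟩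
      rw [← hh]
      ext c
      exact hgn n _
  have hsurj : Function.Surjective f.hom := by
    obtain ⟨n, q, hq⟩ := Module.Finite.exists_fin' Γ M
    obtain ⟨h, hh⟩ := happf (ModuleCat.of Γ (Fin n → Γ)) ((hX _).2
      ⟨(inferInstance : Module.Finite Γ (Fin n → Γ)),
        fun Y _ => Spl.of_projective (X := Fin n → Γ)⟩) (ModuleCat.ofHom q)
    intro m
    obtain ⟨z, rfl⟩ := hq m
    exact ⟨h.hom z, LinearMap.congr_fun (congrArg ModuleCat.Hom.hom hh) z⟩
  refine ⟨X, hXm, f.hom, hsurj, ?_⟩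
  intro X' hX' E _ _ i p hi hp hex
  obtain ⟨P, _, _, b, c, hsum, hcomm, heq, huniv⟩ :=
    exists_pushout (LinearMap.ker f.hom).subtype i
  obtain ⟨q, hq1, hq2⟩ := huniv X' 0 p (fun a => by simp [hex.apply_apply_eq_zero])
  obtain ⟨F, hF1, hF2⟩ := huniv M f.hom 0 (fun a => a.2)
  have hb : Function.Injective b := by
    rw [injective_iff_map_eq_zero]
    intro x hx
    obtain ⟨a, rfl, ha⟩ := heq x 0 (by simpa using hx)
    have : a = 0 := hi (by simpa using ha.symm)
    rw [this, map_zero]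
  have hqs : Function.Surjective q := fun x => by
    obtain ⟨y, rfl⟩ := hp x
    exact ⟨c y, hq2 y⟩
  have hexq : Function.Exact b q := by
    intro e
    constructor
    · intro he
      obtain ⟨x, y, rfl⟩ := hsum e
      rw [map_add, hq1, hq2] at he
      obtain ⟨a, rfl⟩ := (hex y).1 (by simpa using he)
      exact ⟨x + a, by rw [map_add, ← hcomm]; rfl⟩
    · rintro ⟨x, rfl⟩
      simp [hq1]
  have hX'fin := ((hX X').1 hX').1
  have hPm : ModuleCat.of Γ P ∈ 𝒳 := (hX _).2 ⟨finite_of_exact b q hexq, fun Y hY =>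
    Spl.ext_left b q hb hqs hexq (((hX X).1 hXm).2 Y hY) (((hX X').1 hX').2 Y hY)⟩
  obtain ⟨h, hh⟩ := happf _ hPm (ModuleCat.ofHom F)
  have hh' : ∀ z : P, f.hom (h.hom z) = F z := fun z =>
    LinearMap.congr_fun (congrArg ModuleCat.Hom.hom hh) z
  have hg := hbij (h.hom ∘ₗ b) (fun x => (hh' _).trans (hF1 x))
  let g := LinearEquiv.ofBijective _ hg
  have hgi : ∀ x, f.hom (g.symm x) = f.hom x := by
    intro x
    obtain ⟨y, rfl⟩ := g.surjective x
    rw [g.symm_apply_apply]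
    exact ((hh' _).trans (hF1 y)).symm
  have hr0 : ∀ e, g.symm (h.hom (c e)) ∈ LinearMap.ker f.hom := by
    intro e
    rw [LinearMap.mem_ker, hgi]
    exact (hh' _).trans (hF2 e)
  refine section_of_retraction i p hp hex
    (LinearMap.codRestrict _ (g.symm.toLinearMap ∘ₗ h.hom ∘ₗ c) hr0) (fun y => ?_)
  apply Subtype.ext
  change g.symm (h.hom (c (i y))) = y
  rw [← hcomm, LinearEquiv.symm_apply_eq]
  rfl

/-- Wakamatsu's lemma for left approximations. -/
lemma special_left
    (hX : ∀ X : ModuleCat.{0} Γ, X ∈ 𝒳 ↔ Module.Finite Γ X ∧ ∀ Y ∈ 𝒴, Spl Γ X Y)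
    (hY : ∀ Y : ModuleCat.{0} Γ, Y ∈ 𝒴 ↔ Module.Finite Γ Y ∧ ∀ X ∈ 𝒳, Spl Γ X Y)
    (hinj : ∀ (M : Type) [AddCommGroup M] [Module Γ M] [Module.Finite Γ M],
      ∃ (E : Type) (_ : AddCommGroup E) (_ : Module Γ E) (j : M →ₗ[Γ] E),
      Function.Injective j ∧ Module.Injective Γ E ∧ Module.Finite Γ E)
    (happ : ∀ M ∈ fgMod Γ, ∃ (Y : ModuleCat.{0} Γ) (f : M ⟶ Y), IsLeftApprox 𝒴 f)
    (M : ModuleCat.{0} Γ) (hM : Module.Finite Γ M) :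
    ∃ Y ∈ 𝒴, ∃ f : M →ₗ[Γ] Y, Function.Injective f ∧
      ∀ Y' ∈ 𝒴, Spl Γ (Y ⧸ LinearMap.range f) Y' := by
  obtain ⟨Y, ⟨f, hYm, happf⟩, hmin⟩ := (measure_wf_exists (fun X : ModuleCat.{0} Γ =>
    Module.length Γ X) (fun Y => ∃ f : M ⟶ Y, IsLeftApprox 𝒴 f) (happ M hM))
  have hYfin : Module.Finite Γ Y := ((hY Y).1 hYm).1
  have hbij : ∀ g : Y →ₗ[Γ] Y, (∀ x, g (f.hom x) = f.hom x) → Function.Bijective g := by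
    intro g hg
    by_contra hnb
    obtain ⟨n, r, hr, hne⟩ := fitting g hnb
    have hgn : ∀ n : ℕ, ∀ x, (g ^ n) (f.hom x) = f.hom x := by
      intro n
      induction n with
      | zero => intro x; rfl
      | succ n ih =>
        intro x
        rw [pow_succ]
        change (g ^ n) (g (f.hom x)) = _
        rw [hg, ih]
    refine hmin (ModuleCat.of Γ (LinearMap.range (g ^ n)))
      ⟨ModuleCat.ofHom (LinearMap.codRestrict _ f.hom (fun x => ⟨_, hgn n x⟩)), ?_, ?_⟩
      (Submodule.length_lt hne)
    · rw [hY]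
      exact ⟨Module.Finite.range _, fun X hX => (((hY Y).1 hYm).2 X hX).retract_right
        (LinearMap.range (g ^ n)).subtype r hr⟩
    · intro C hC t
      obtain ⟨h, hh⟩ := happf C hC t
      refine ⟨ModuleCat.ofHom (h.hom ∘ₗ (LinearMap.range (g ^ n)).subtype), ?_⟩
      rw [← hh]
      ext c
      rfl
  have hfi : Function.Injective f.hom := by
    obtain ⟨I, _, _, j, hj, hI, hIf⟩ := hinj M
    obtain ⟨h, hh⟩ := happf (ModuleCat.of Γ I) ((hY _).2
      ⟨hIf, fun X _ => Spl.of_injective hI⟩) (ModuleCat.ofHom j)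
    have hh' : ∀ z, h.hom (f.hom z) = j z := fun z =>
      LinearMap.congr_fun (congrArg ModuleCat.Hom.hom hh) z
    intro x y hxy
    apply hj
    rw [← hh', ← hh', hxy]
  refine ⟨Y, hYm, f.hom, hfi, ?_⟩
  intro Y' hY' E _ _ i p hi hp hex
  let π := (LinearMap.range f.hom).mkQ
  let P : Submodule Γ (E × Y) :=
    LinearMap.ker (p ∘ₗ LinearMap.fst Γ E Y - π ∘ₗ LinearMap.snd Γ E Y)
  have hP : ∀ z, z ∈ P ↔ p z.1 = π z.2 := fun z => by simp [P, sub_eq_zero]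
  let i' : Y' →ₗ[Γ] P := LinearMap.codRestrict P (LinearMap.inl Γ E Y ∘ₗ i)
    (fun y => by simp [hP, hex.apply_apply_eq_zero])
  let q : P →ₗ[Γ] Y := LinearMap.snd Γ E Y ∘ₗ P.subtype
  have hi' : Function.Injective i' :=
    fun y y' hyy => hi (congrArg (fun z : P => z.1.1) hyy)
  have hq : Function.Surjective q := fun x => by
    obtain ⟨b, hb⟩ := hp (π x)
    exact ⟨⟨(b, x), (hP _).2 hb⟩, rfl⟩
  have hexq : Function.Exact i' q := by
    rintro ⟨⟨b, x⟩, hz⟩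
    constructor
    · intro h0
      have h0' : x = 0 := h0
      subst h0'
      have := (hP _).1 hz
      obtain ⟨y, rfl⟩ := (hex b).1 (by simpa using this)
      exact ⟨y, rfl⟩
    · rintro ⟨y, hy⟩
      rw [← hy]; rfl
  have hY'fin := ((hY Y').1 hY').1
  have hPm : ModuleCat.of Γ P ∈ 𝒴 := (hY _).2 ⟨finite_of_exact i' q hexq, fun X hX =>
    Spl.ext_right i' q hi' hq hexq (((hY Y').1 hY').2 X hX) (((hY Y).1 hYm).2 X hX)⟩
  let t : M →ₗ[Γ] P := LinearMap.codRestrict P (LinearMap.inr Γ E Y ∘ₗ f.hom)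
    (fun m => by
      rw [hP]
      have : π (f.hom m) = 0 := by
        rw [Submodule.mkQ_apply, Submodule.Quotient.mk_eq_zero]
        exact ⟨m, rfl⟩
      simp [this])
  obtain ⟨h, hh⟩ := happf _ hPm (ModuleCat.ofHom t)
  have hh' : ∀ z, h.hom (f.hom z) = t z := fun z =>
    LinearMap.congr_fun (congrArg ModuleCat.Hom.hom hh) z
  have hg1 : ∀ x, (q ∘ₗ h.hom) (f.hom x) = f.hom x := fun x => congrArg q (hh' x)
  let g := LinearEquiv.ofBijective _ (hbij (q ∘ₗ h.hom) hg1)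
  let s : Y →ₗ[Γ] P := h.hom ∘ₗ g.symm.toLinearMap
  have hs1 : ∀ y, q (s y) = y := fun y => g.apply_symm_apply y
  have hs2 : ∀ m, s (f.hom m) = t m := by
    intro m
    have : g.symm (f.hom m) = f.hom m := by
      rw [LinearEquiv.symm_apply_eq]
      exact (hg1 m).symm
    change h.hom (g.symm (f.hom m)) = _
    rw [this, hh']
  obtain ⟨k, hk⟩ := exists_desc π (LinearMap.range f.hom).mkQ_surjective
    (LinearMap.fst Γ E Y ∘ₗ P.subtype ∘ₗ s) (fun y hy => by
      rw [Submodule.mkQ_apply, Submodule.Quotient.mk_eq_zero] at hy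
      obtain ⟨m, rfl⟩ := hy
      change (s (f.hom m)).1.1 = 0
      rw [hs2]; rfl)
  refine ⟨k, fun x => ?_⟩
  obtain ⟨y, rfl⟩ := (LinearMap.range f.hom).mkQ_surjective x
  change p (k (π y)) = π y
  rw [hk]
  exact ((hP _).1 (s y).2).trans (congrArg π (hs1 y))

/-- Salce's lemma, first half. -/
lemma salce_left
    (hX : ∀ X : ModuleCat.{0} Γ, X ∈ 𝒳 ↔ Module.Finite Γ X ∧ ∀ Y ∈ 𝒴, Spl Γ X Y)
    (hY : ∀ Y : ModuleCat.{0} Γ, Y ∈ 𝒴 ↔ Module.Finite Γ Y ∧ ∀ X ∈ 𝒳, Spl Γ X Y)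
    (hinj : ∀ (M : Type) [AddCommGroup M] [Module Γ M] [Module.Finite Γ M],
      ∃ (E : Type) (_ : AddCommGroup E) (_ : Module Γ E) (j : M →ₗ[Γ] E),
      Function.Injective j ∧ Module.Injective Γ E ∧ Module.Finite Γ E)
    (happ : ∀ M ∈ fgMod Γ, ∃ (X : ModuleCat.{0} Γ) (f : X ⟶ M), IsRightApprox 𝒳 f)
    (M : ModuleCat.{0} Γ) (hM : Module.Finite Γ M) :
    ∃ (Y : ModuleCat.{0} Γ) (f : M ⟶ Y), IsLeftApprox 𝒴 f := by
  obtain ⟨I, _, _, j, hj, hI, hIf⟩ := hinj M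
  obtain ⟨X, hXm, f, hf, hK⟩ := special_right hX happ
    (ModuleCat.of Γ (I ⧸ LinearMap.range j)) (Module.Finite.quotient Γ _)
  have hXfin := ((hX X).1 hXm).1
  let π : I →ₗ[Γ] (ModuleCat.of Γ (I ⧸ LinearMap.range j)) := (LinearMap.range j).mkQ
  have hπ : ∀ z, π z = 0 ↔ ∃ m, j m = z := fun z => by
    change (LinearMap.range j).mkQ z = 0 ↔ _
    rw [Submodule.mkQ_apply, Submodule.Quotient.mk_eq_zero]; rfl
  have hπs : Function.Surjective π := (LinearMap.range j).mkQ_surjective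
  let P : Submodule Γ (X × I) :=
    LinearMap.ker (f ∘ₗ LinearMap.fst Γ X I - π ∘ₗ LinearMap.snd Γ X I)
  have hP : ∀ z, z ∈ P ↔ f z.1 = π z.2 := fun z => by simp [P, sub_eq_zero]
  let a : LinearMap.ker f →ₗ[Γ] P :=
    LinearMap.codRestrict P (LinearMap.inl Γ X I ∘ₗ (LinearMap.ker f).subtype)
    (fun y => by simp [hP])
  let b : P →ₗ[Γ] I := LinearMap.snd Γ X I ∘ₗ P.subtype
  let c : M →ₗ[Γ] P := LinearMap.codRestrict P (LinearMap.inr Γ X I ∘ₗ j) (fun m => by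
    have : π (j m) = 0 := (hπ _).2 ⟨m, rfl⟩
    simp [hP, this])
  let d : P →ₗ[Γ] X := LinearMap.fst Γ X I ∘ₗ P.subtype
  have ha : Function.Injective a := fun y y' hyy =>
    Subtype.ext (congrArg (fun z : P => z.1.1) hyy)
  have hb : Function.Surjective b := fun z => by
    obtain ⟨x, hx⟩ := hf (π z)
    exact ⟨⟨(x, z), (hP _).2 hx⟩, rfl⟩
  have hd : Function.Surjective d := fun x => by
    obtain ⟨z, hz⟩ := hπs (f x)
    exact ⟨⟨(x, z), (hP _).2 hz.symm⟩, rfl⟩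
  have hab : Function.Exact a b := by
    rintro ⟨⟨x, z⟩, hz⟩
    constructor
    · intro h0
      have h0' : z = 0 := h0
      subst h0'
      have := (hP _).1 hz
      exact ⟨⟨x, by simpa using this⟩, rfl⟩
    · rintro ⟨y, hy⟩
      rw [← hy]; rfl
  have hcd : Function.Exact c d := by
    rintro ⟨⟨x, z⟩, hz⟩
    constructor
    · intro h0
      have h0' : x = 0 := h0
      subst h0'
      have := (hP _).1 hz
      obtain ⟨m, rfl⟩ := (hπ z).1 (by simpa using this.symm)
      exact ⟨m, rfl⟩
    · rintro ⟨y, hy⟩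
      rw [← hy]; rfl
  have hPm : ModuleCat.of Γ P ∈ 𝒴 := (hY _).2
    ⟨(inferInstance : Module.Finite Γ P), fun X' hX' =>
      Spl.ext_right a b ha hb hab (hK X' hX') (Spl.of_injective hI)⟩
  refine ⟨ModuleCat.of Γ P, ModuleCat.ofHom c, hPm, fun Y' hY' g => ?_⟩
  obtain ⟨k, hk⟩ := (((hX X).1 hXm).2 Y' hY').extend c d hd hcd g.hom (fun m hm => by
    have h0 : j m = 0 := congrArg (fun z : P => z.1.2) hm
    have : m = 0 := hj (by simpa using h0)
    rw [this, map_zero])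
  exact ⟨ModuleCat.ofHom k, by ext m; exact hk m⟩

/-- Salce's lemma, second half. -/
lemma salce_right
    (hX : ∀ X : ModuleCat.{0} Γ, X ∈ 𝒳 ↔ Module.Finite Γ X ∧ ∀ Y ∈ 𝒴, Spl Γ X Y)
    (hY : ∀ Y : ModuleCat.{0} Γ, Y ∈ 𝒴 ↔ Module.Finite Γ Y ∧ ∀ X ∈ 𝒳, Spl Γ X Y)
    (hinj : ∀ (M : Type) [AddCommGroup M] [Module Γ M] [Module.Finite Γ M],
      ∃ (E : Type) (_ : AddCommGroup E) (_ : Module Γ E) (j : M →ₗ[Γ] E),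
      Function.Injective j ∧ Module.Injective Γ E ∧ Module.Finite Γ E)
    (happ : ∀ M ∈ fgMod Γ, ∃ (Y : ModuleCat.{0} Γ) (f : M ⟶ Y), IsLeftApprox 𝒴 f)
    (M : ModuleCat.{0} Γ) (hM : Module.Finite Γ M) :
    ∃ (X : ModuleCat.{0} Γ) (f : X ⟶ M), IsRightApprox 𝒳 f := by
  obtain ⟨n, π, hπ⟩ := Module.Finite.exists_fin' Γ M
  obtain ⟨Y, hYm, f, hf, hC⟩ := special_left hX hY hinj happ
    (ModuleCat.of Γ (LinearMap.ker π)) (inferInstance : Module.Finite Γ (LinearMap.ker π))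
  have hYfin := ((hY Y).1 hYm).1
  obtain ⟨P, _, _, b, c, hsum, hcomm, heq, huniv⟩ :=
    exists_pushout (A := LinearMap.ker π) f (LinearMap.ker π).subtype
  let ρ := (LinearMap.range f).mkQ
  have hρ : ∀ y, ρ y = 0 ↔ ∃ z, f z = y := fun y => by
    rw [Submodule.mkQ_apply, Submodule.Quotient.mk_eq_zero]; rfl
  obtain ⟨q, hq1, hq2⟩ := huniv M 0 π (fun a => a.2.symm)
  obtain ⟨w, hw1, hw2⟩ := huniv _ ρ 0 (fun a => (hρ _).2 ⟨a, rfl⟩)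
  have hb : Function.Injective b := by
    rw [injective_iff_map_eq_zero]
    intro y hy
    obtain ⟨a, rfl, ha⟩ := heq y 0 (by simpa using hy)
    have : a = 0 := Subtype.ext ha.symm
    rw [this]; exact map_zero f
  have hc : Function.Injective c := by
    rw [injective_iff_map_eq_zero]
    intro y hy
    obtain ⟨a, ha, rfl⟩ := heq 0 y (by simpa using hy.symm)
    have : a = 0 := hf (ha.symm.trans (map_zero f).symm)
    rw [this, map_zero]
  have hqs : Function.Surjective q := fun m => by
    obtain ⟨z, rfl⟩ := hπ m
    exact ⟨c z, hq2 z⟩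
  have hws : Function.Surjective w := fun m => by
    obtain ⟨z, rfl⟩ := (LinearMap.range f).mkQ_surjective m
    exact ⟨b z, hw1 z⟩
  have hbq : Function.Exact b q := by
    intro e
    constructor
    · intro he
      obtain ⟨x, y, rfl⟩ := hsum e
      rw [map_add, hq1, hq2] at he
      have hy : y ∈ LinearMap.ker π := by simpa using he
      exact ⟨x + f ⟨y, hy⟩, by rw [map_add, hcomm ⟨y, hy⟩]; rfl⟩
    · rintro ⟨x, rfl⟩
      simp [hq1]
  have hcw : Function.Exact c w := by
    intro e
    constructor
    · intro he
      obtain ⟨x, y, rfl⟩ := hsum e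
      rw [map_add, hw1, hw2] at he
      obtain ⟨a, rfl⟩ := (hρ x).1 (by simpa using he)
      exact ⟨(LinearMap.ker π).subtype a + y, by rw [map_add, ← hcomm a]⟩
    · rintro ⟨x, rfl⟩
      simp [hw2]
  have hPm : ModuleCat.of Γ P ∈ 𝒳 := (hX _).2 ⟨finite_of_exact b q hbq, fun Y' hY' =>
    Spl.ext_left c w hc hws hcw Spl.of_projective (hC Y' hY')⟩
  refine ⟨ModuleCat.of Γ P, ModuleCat.ofHom q, hPm, fun X' hX' g => ?_⟩
  obtain ⟨k, hk⟩ := (((hY Y).1 hYm).2 X' hX').lift b q hb hqs hbq g.hom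
  exact ⟨ModuleCat.ofHom k, by ext m; exact hk m⟩

end Approx

end CotorsionAux

/-- Let `Γ` be an artin algebra and `(𝒳, 𝒴)` a hereditary cotorsion pair
in `Γ`-mod. Then `𝒳` is contravariantly finite (in the finitely generated modules) if and
only if `𝒴` is covariantly finite. -/
theorem hereditary_cotorsion_contravariantlyFinite_iff_covariantlyFinite
    (R : Type) [CommRing R] [IsArtinianRing R]
    (Γ : Type) [Ring Γ] [Algebra R Γ] [Module.Finite R Γ]
    (𝒳 𝒴 : Set (ModuleCat Γ)) (hP : IsCotorsionPair Γ 𝒳 𝒴)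
    (hH : IsHereditaryPair Γ 𝒳 𝒴) :
    (∀ M ∈ fgMod Γ, ∃ (X : ModuleCat Γ) (f : X ⟶ M), IsRightApprox 𝒳 f) ↔
    (∀ M ∈ fgMod Γ, ∃ (Y : ModuleCat Γ) (f : M ⟶ Y), IsLeftApprox 𝒴 f) := by
  have hart : IsArtinianRing Γ := IsArtinianRing.of_finite R Γ
  have hX : ∀ X : ModuleCat.{0} Γ, X ∈ 𝒳 ↔
      Module.Finite Γ X ∧ ∀ Y ∈ 𝒴, CotorsionAux.Spl Γ X Y := by
    intro X
    conv_lhs => rw [hP.left_eq]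
    exact and_congr Iff.rfl (forall₂_congr fun Y _ => CotorsionAux.ext_one_iff X Y)
  have hY : ∀ Y : ModuleCat.{0} Γ, Y ∈ 𝒴 ↔
      Module.Finite Γ Y ∧ ∀ X ∈ 𝒳, CotorsionAux.Spl Γ X Y := by
    intro Y
    conv_lhs => rw [hP.right_eq]
    exact and_congr Iff.rfl (forall₂_congr fun X _ => CotorsionAux.ext_one_iff X Y)
  have hinj := fun (M : Type) [AddCommGroup M] [Module Γ M] [Module.Finite Γ M] =>
    CotorsionAux.exists_fg_injective R Γ M
  exact ⟨fun h M hM => CotorsionAux.salce_left hX hY hinj h M hM,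
    fun h M hM => CotorsionAux.salce_right hX hY hinj h M hM⟩
end
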